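/- Let k be a field of characteristic p with p > a + b − 2, where a, b ≥ 1, and let M = k[x,y]/(x^a, y^b). Then M has the strong Lefschetz property. -/

import Mathlib

/-!
The operator `D = ∑ i, (a i * ∂_i - X i * ∂_i ^ 2)` lowers degrees by one, and together with
multiplication by `ℓ = ∑ i, X i` it behaves like an `sl₂`-pair: by Euler's identity `[D, ℓ]` acts on
forms of degree `d` as the scalar `∑ i, a i - 2 * d`. The coefficients of `D` are chosen so that it
kills every `X i ^ (a i + 1)`, which makes it descend to the complete intersection
`k[X i] / (X i ^ (a i + 1))`. There the usual representation-theoretic argument applies, since it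
only divides by nonzero integers of absolute value at most the socle degree `∑ i, a i`.
-/

open MvPolynomial TensorProduct

/-- `gr` is a grading making `M` a graded module over the standard graded polynomial ring
`k[x_1, …, x_n]`: `M` is the internal direct sum of the subspaces `gr i`, and homogeneous
polynomials of degree `i` map `gr j` into `gr (i + j)`. -/
def IsGrading (k : Type*) [Field k] (n : ℕ) {M : Type*} [AddCommGroup M] [Module k M]
    [Module (MvPolynomial (Fin n) k) M] (gr : ℕ → Submodule k M) : Prop :=
  DirectSum.IsInternal gr ∧
    ∀ (i j : ℕ) (r : MvPolynomial (Fin n) k), r ∈ homogeneousSubmodule (Fin n) k i →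
      ∀ x ∈ gr j, r • x ∈ gr (i + j)

/-- The scalar `z` satisfies the strong Lefschetz condition for the grading `gr`:
for all nonnegative `a` and `d`, multiplication by `z ^ a` maps `gr d` to `gr (d + a)`
injectively or surjectively. -/
def IsSLAction {k A T : Type*} [Field k] [CommRing A] [AddCommGroup T] [Module k T]
    [Module A T] (gr : ℕ → Submodule k T) (z : A) : Prop :=
  ∀ a d : ℕ, (∀ x ∈ gr d, z ^ a • x = 0 → x = 0) ∨
    (∀ w ∈ gr (d + a), ∃ x ∈ gr d, z ^ a • x = w)

/-- The data `(iv α, dv α, e α)` exhibits a degree-zero decomposition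
`T ≅ ⊕_α k[z](-(iv α))/(z^(dv α))` of the graded module `T` as a graded `k[z]`-module:
each `e α` is homogeneous of degree `iv α`, is killed by `z ^ dv α`, the elements
`z ^ j • e α` (`j < dv α`) are homogeneous of degree `iv α + j` and form a `k`-basis of `T`. -/
def IsDecomp {k A T : Type*} [Field k] [CommRing A] [AddCommGroup T] [Module k T]
    [Module A T] (gr : ℕ → Submodule k T) (z : A) {Λ : Type*} (iv dv : Λ → ℕ)
    (e : Λ → T) : Prop :=
  (∀ α, 1 ≤ dv α) ∧ (∀ (α : Λ) (j : ℕ), j < dv α → z ^ j • e α ∈ gr (iv α + j)) ∧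
    (∀ α, z ^ dv α • e α = 0) ∧
    LinearIndependent k (fun q : Σ α : Λ, Fin (dv α) => z ^ (q.2 : ℕ) • e q.1) ∧
    Submodule.span k (Set.range (fun q : Σ α : Λ, Fin (dv α) => z ^ (q.2 : ℕ) • e q.1)) = ⊤

/-- `p` is the socle degree of the graded module with grading `gr`:
the largest degree in which the module is nonzero. -/
def IsSocleDegree {k T : Type*} [Field k] [AddCommGroup T] [Module k T]
    (gr : ℕ → Submodule k T) (p : ℕ) : Prop :=
  gr p ≠ ⊥ ∧ ∀ e : ℕ, p < e → gr e = ⊥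

/-- The partial order on the cyclic summands of a decomposition:
`S_β ⪯ S_α` iff `iv α ≤ iv β` and `dv β + iv β ≤ dv α + iv α`. -/
def Prec {Λ : Type*} (iv dv : Λ → ℕ) (β α : Λ) : Prop :=
  iv α ≤ iv β ∧ dv β + iv β ≤ dv α + iv α

/-- A decomposition with data `(iv, dv)` is almost centered if whenever `S_β ⪯ S_α` one has
`|L_{αβ} - R_{αβ}| ≤ 1`, where `L_{αβ} = iv β - iv α` and
`R_{αβ} = (dv α + iv α) - (dv β + iv β)`. -/
def AlmostCentered {Λ : Type*} (iv dv : Λ → ℕ) : Prop :=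
  ∀ α β : Λ, Prec iv dv β α →
    |((iv β : ℤ) - (iv α : ℤ)) - (((dv α : ℤ) + (iv α : ℤ)) - ((dv β : ℤ) + (iv β : ℤ)))| ≤ 1

/-- The grading on the quotient `k[x_1, …, x_n]/I` induced by the standard grading:
the degree `e` piece is the image of the homogeneous polynomials of degree `e`. -/
noncomputable def quotGr {k : Type*} [Field k] {σ : Type*} (I : Ideal (MvPolynomial σ k))
    (e : ℕ) : Submodule k (MvPolynomial σ k ⧸ I) :=
  Submodule.map (Ideal.Quotient.mkₐ k I).toLinearMap (homogeneousSubmodule σ k e)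

open Nat in
theorem isUnit_intCast_of_natAbs_le {R : Type*} [CommRing R] {s : ℕ} (hs : IsUnit (s ! : R))
    {z : ℤ} (hz : z ≠ 0) (hzs : z.natAbs ≤ s) : IsUnit (z : R) := by
  have hunit : IsUnit (z.natAbs : R) :=
    isUnit_of_dvd_unit (Nat.cast_dvd_cast (Nat.dvd_factorial (Int.natAbs_pos.mpr hz) hzs)) hs
  obtain h | h := Int.natAbs_eq z <;> rw [h]
  · simpa only [Int.cast_natCast] using hunit
  · simpa only [Int.cast_neg, Int.cast_natCast] using hunit.neg

/-- `L` raises and `D` lowers degrees by one with respect to `gr`, and `[D, L]` acts on the piece of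
degree `d` as the scalar `s - 2 * d`. When `gr` is a grading, this says that `D`, `L` and their
commutator span a copy of `sl₂` (or a quotient of it) for which `gr d` has weight `s - 2 * d`.
The pieces are indexed by `ℕ`, so `D` is separately required to vanish in degree `0`. -/
structure IsSl2Pair {R M : Type*} [CommRing R] [AddCommGroup M] [Module R M]
    (gr : ℕ → Submodule R M) (s : ℕ) (L D : Module.End R M) : Prop where
  raise_mem : ∀ {d x}, x ∈ gr d → L x ∈ gr (d + 1)
  lower_mem : ∀ {d x}, x ∈ gr (d + 1) → D x ∈ gr d
  lower_eq_zero : ∀ {x}, x ∈ gr 0 → D x = 0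
  lower_raise : ∀ {d x}, x ∈ gr d → D (L x) = L (D x) + ((s - 2 * d : ℤ) : R) • x

namespace IsSl2Pair

section Module

open Nat

variable {R M : Type*} [CommRing R] [AddCommGroup M] [Module R M] {gr : ℕ → Submodule R M}
  {s : ℕ} {L D : Module.End R M}

theorem raise_lower_mem (h : IsSl2Pair gr s L D) {d : ℕ} {x : M} (hx : x ∈ gr d) :
    L (D x) ∈ gr d := by
  cases d with
  | zero => simp [h.lower_eq_zero hx]
  | succ d => exact h.raise_mem (h.lower_mem hx)

theorem lower_raise_pow (h : IsSl2Pair gr s L D) (n : ℕ) {d : ℕ} {x : M} (hx : x ∈ gr d) :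
    D ((L ^ (n + 1)) x) =
      (L ^ (n + 1)) (D x) + (((n + 1) * (s - 2 * d - n) : ℤ) : R) • (L ^ n) x := by
  induction n generalizing d x with
  | zero => simp [h.lower_raise hx]
  | succ n ih =>
    have hpow (m : ℕ) (y : M) : (L ^ m) (L y) = (L ^ (m + 1)) y := by
      rw [pow_succ, Module.End.mul_apply]
    rw [← hpow, ih (h.raise_mem hx), h.lower_raise hx, map_add, map_smul, hpow, hpow]
    push_cast
    module

theorem isUnit_lower_raise_pow_coeff (hs : IsUnit (s ! : R)) {n d : ℕ} (hn : n < s)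
    (h0 : (s - 2 * d - n : ℤ) ≠ 0) (hle : (s - 2 * d - n : ℤ).natAbs ≤ s) :
    IsUnit (((n + 1) * (s - 2 * d - n) : ℤ) : R) := by
  rw [Int.cast_mul]
  exact (isUnit_intCast_of_natAbs_le hs (by lia) (by lia)).mul
    (isUnit_intCast_of_natAbs_le hs h0 hle)

theorem eq_zero_of_raise_pow_eq_zero (h : IsSl2Pair gr s L D) (hs : IsUnit (s ! : R)) :
    ∀ n d : ℕ, n + 2 * d ≤ s → ∀ x ∈ gr d, (L ^ n) x = 0 → x = 0
  | 0, _, _, _, _, hLx => by simpa using hLx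
  | n + 1, d, hnd, x, hx, hLx => by
    set c : R := (((n + 1) * (s - 2 * d - n) : ℤ) : R)
    have hc : IsUnit c := isUnit_lower_raise_pow_coeff hs (by lia) (by lia) (by lia)
    have hLDx : L (D x) + c • x = 0 := by
      refine eq_zero_of_raise_pow_eq_zero h hs n d (by lia) _
        (add_mem (h.raise_lower_mem hx) ((gr d).smul_mem c hx)) ?_
      rw [map_add, map_smul, ← Module.End.mul_apply, ← pow_succ, ← h.lower_raise_pow n hx, hLx,
        map_zero]
    have hDx : D x = 0 := by
      cases d with
      | zero => exact h.lower_eq_zero hx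
      | succ d =>
        refine eq_zero_of_raise_pow_eq_zero h hs (n + 2) d (by lia) _ (h.lower_mem hx) ?_
        rw [pow_succ, Module.End.mul_apply, eq_neg_of_add_eq_zero_left hLDx, map_neg, map_smul, hLx,
          smul_zero, neg_zero]
    rwa [hDx, map_zero, zero_add, hc.smul_eq_zero] at hLDx
termination_by n d => (d, n)

theorem exists_raise_pow_eq (h : IsSl2Pair gr s L D) (hs : IsUnit (s ! : R))
    (hgr : ∀ d, s < d → gr d = ⊥) :
    ∀ n d : ℕ, s ≤ n + 2 * d → ∀ w ∈ gr (d + n), ∃ x ∈ gr d, (L ^ n) x = w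
  | 0, _, _, w, hw => ⟨w, hw, rfl⟩
  | n + 1, d, hnd, w, hw => by
    by_cases hds : s < d + (n + 1)
    · rw [hgr _ hds, Submodule.mem_bot] at hw
      exact ⟨0, zero_mem _, by rw [map_zero, hw]⟩
    obtain ⟨u, hu, hLu⟩ := exists_raise_pow_eq h hs hgr n (d + 1) (by lia) w
      (by rwa [add_right_comm])
    obtain ⟨t, ht, hLt⟩ := exists_raise_pow_eq h hs hgr (n + 2) d (by lia) (L w) (h.raise_mem hw)
    -- Evaluating `D (L w)` through both preimages `L ^ (n + 1) u = L w = L ^ (n + 2) t` expresses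
    -- a unit multiple of `w` as an element of the image of `L ^ (n + 1)`.
    set c : R := (((n + 1) * (s - 2 * (d + 1 : ℕ) - n) : ℤ) : R)
    set c' : R := (((((n + 1 : ℕ) : ℤ) + 1) * (s - 2 * d - (n + 1 : ℕ)) : ℤ) : R)
    have hc : IsUnit c := isUnit_lower_raise_pow_coeff hs (by lia) (by lia) (by lia)
    have hDLu : D (L w) = (L ^ (n + 1)) (D u) + c • w := by
      rw [← hLu, ← h.lower_raise_pow n hu, pow_succ' L n, Module.End.mul_apply]
    have hDLt : D (L w) = (L ^ (n + 1)) (L (D t) + c' • t) := by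
      rw [← hLt, h.lower_raise_pow (n + 1) ht, map_add, map_smul, pow_succ L (n + 1),
        Module.End.mul_apply]
    have hcw : (L ^ (n + 1)) (L (D t) + c' • t - D u) = c • w := by
      rw [map_sub, ← hDLt, hDLu, add_sub_cancel_left]
    obtain ⟨v, hv⟩ := hc
    refine ⟨v⁻¹ • (L (D t) + c' • t - D u), ?_, ?_⟩
    · exact (gr d).smul_mem _ (sub_mem (add_mem (h.raise_lower_mem ht) ((gr d).smul_mem _ ht))
        (h.lower_mem hu))
    · rw [Units.smul_def, map_smul, hcw, ← hv, ← Units.smul_def, ← Units.smul_def, inv_smul_smul]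
termination_by n d => 2 * (s + 1 - (d + n)) + n

theorem map (h : IsSl2Pair gr s L D) {N : Type*} [AddCommGroup N] [Module R N] (π : M →ₗ[R] N)
    {L' D' : Module.End R N} (hL : ∀ x, L' (π x) = π (L x)) (hD : ∀ x, D' (π x) = π (D x)) :
    IsSl2Pair (fun d ↦ (gr d).map π) s L' D' where
  raise_mem := by
    rintro d _ ⟨x, hx, rfl⟩
    exact ⟨L x, h.raise_mem hx, (hL x).symm⟩
  lower_mem := by
    rintro d _ ⟨x, hx, rfl⟩
    exact ⟨D x, h.lower_mem hx, (hD x).symm⟩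
  lower_eq_zero := by
    rintro _ ⟨x, hx, rfl⟩
    rw [hD, h.lower_eq_zero hx, map_zero]
  lower_raise := by
    rintro d _ ⟨x, hx, rfl⟩
    rw [hL, hD, h.lower_raise hx, hD, hL, map_add, map_smul]

end Module

open Nat in
theorem isSLAction {k A T : Type*} [Field k] [CommRing A] [Algebra k A] [AddCommGroup T]
    [Module k T] [Module A T] [IsScalarTower k A T] {gr : ℕ → Submodule k T} {s : ℕ} {z : A}
    {D : Module.End k T} (h : IsSl2Pair gr s (Algebra.lsmul k k T z) D) (hs : IsUnit (s ! : k))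
    (hgr : ∀ d, s < d → gr d = ⊥) : IsSLAction gr z := by
  intro n d
  have hpow (x : T) : (Algebra.lsmul k k T z ^ n) x = z ^ n • x := by
    rw [← map_pow, Algebra.lsmul_coe]
  simp only [← hpow]
  exact (le_total (n + 2 * d) s).imp (h.eq_zero_of_raise_pow_eq_zero hs n d)
    (h.exists_raise_pow_eq hs hgr n d)

end IsSl2Pair

section Polynomial

variable {R σ : Type*} [CommRing R]

theorem isHomogeneous_sum_X [Fintype σ] :
    (∑ i, X i : MvPolynomial σ R).IsHomogeneous 1 :=
  IsHomogeneous.sum _ _ _ fun i _ ↦ isHomogeneous_X R i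

theorem pderiv_eq_zero_of_isHomogeneous_zero {f : MvPolynomial σ R} (hf : f.IsHomogeneous 0)
    (i : σ) : pderiv i f = 0 := by
  rw [← totalDegree_zero_iff_isHomogeneous, totalDegree_eq_zero_iff_eq_C] at hf
  rw [hf, pderiv_C]

theorem isHomogeneous_X_mul_pderiv {f : MvPolynomial σ R} {d : ℕ} (hf : f.IsHomogeneous d)
    (i : σ) : (X i * pderiv i f).IsHomogeneous d := by
  cases d with
  | zero => simpa [pderiv_eq_zero_of_isHomogeneous_zero hf] using isHomogeneous_zero σ R 0
  | succ d => simpa [add_comm] using (isHomogeneous_X R i).mul hf.pderiv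

theorem mem_span_X_pow_of_isHomogeneous [Fintype σ] {a : σ → ℕ} {d : ℕ} (hd : ∑ i, a i < d)
    {f : MvPolynomial σ R} (hf : f.IsHomogeneous d) :
    f ∈ Ideal.span (Set.range fun i ↦ (X i : MvPolynomial σ R) ^ (a i + 1)) := by
  have hrange : (Set.range fun i ↦ (X i : MvPolynomial σ R) ^ (a i + 1)) =
      (fun m ↦ monomial m 1) '' Set.range fun i ↦ Finsupp.single i (a i + 1) := by
    simp only [X_pow_eq_monomial, ← Set.range_comp, Function.comp_def]
  rw [hrange, mem_ideal_span_monomial_image]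
  intro m hm
  have hdeg : ∑ i, m i = d := by
    rw [← Finsupp.degree_eq_sum, Finsupp.degree_eq_weight_one]
    exact hf (mem_support_iff.mp hm)
  obtain ⟨i, -, hi⟩ := Finset.exists_lt_of_sum_lt (hd.trans_eq hdeg.symm)
  exact ⟨_, ⟨i, rfl⟩, Finsupp.single_le_iff.mpr hi⟩

/-- The lowering operator `∑ i, (a i * ∂_i - X i * ∂_i ^ 2)` on polynomials, the partner of
multiplication by `∑ i, X i` in an `sl₂`-pair. In characteristic zero it induces on
`R[x] / (x ^ (a + 1))` the lowering operator of the irreducible `sl₂`-representation of dimension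
`a + 1`, and in several variables that of the tensor product of these representations. -/
noncomputable def lowering [Fintype σ] (a : σ → ℕ) : Module.End R (MvPolynomial σ R) :=
  ∑ i, ((a i : R) • (pderiv i).toLinearMap -
    LinearMap.mulLeft R (X i) ∘ₗ (pderiv i).toLinearMap ∘ₗ (pderiv i).toLinearMap)

variable [Fintype σ] (a : σ → ℕ)

theorem lowering_apply (f : MvPolynomial σ R) :
    lowering a f = ∑ i, ((a i : R) • pderiv i f - X i * pderiv i (pderiv i f)) := by
  simp [lowering]

theorem lowering_mul (f g : MvPolynomial σ R) :
    lowering a (f * g) = f * lowering a g + g * lowering a f -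
      2 * ∑ i, X i * (pderiv i f * pderiv i g) := by
  simp only [lowering_apply, Finset.mul_sum, ← Finset.sum_add_distrib, ← Finset.sum_sub_distrib]
  refine Finset.sum_congr rfl fun i _ ↦ ?_
  simp only [pderiv_mul, map_add, smul_eq_C_mul]
  ring

theorem lowering_eq_zero_of_isHomogeneous_zero {f : MvPolynomial σ R} (hf : f.IsHomogeneous 0) :
    lowering a f = 0 := by
  simp [lowering_apply, pderiv_eq_zero_of_isHomogeneous_zero hf]

theorem isHomogeneous_lowering {f : MvPolynomial σ R} {d : ℕ} (hf : f.IsHomogeneous (d + 1)) :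
    (lowering a f).IsHomogeneous d := by
  rw [lowering_apply]
  refine IsHomogeneous.sum _ _ _ fun i _ ↦ IsHomogeneous.sub ?_ ?_
  · exact (homogeneousSubmodule σ R d).smul_mem _ hf.pderiv
  · exact isHomogeneous_X_mul_pderiv hf.pderiv i

theorem lowering_X_pow_succ (j : σ) (m : ℕ) :
    lowering a (X j ^ (m + 1) : MvPolynomial σ R) =
      ((m + 1) * (a j - m) : MvPolynomial σ R) * X j ^ m := by
  have hderiv : pderiv j (X j ^ (m + 1) : MvPolynomial σ R) = (m + 1 : ℕ) • X j ^ m := by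
    simp
  have heuler : X j * pderiv j (X j ^ m : MvPolynomial σ R) = m • X j ^ m := by
    rw [X_pow_eq_monomial, X_mul_pderiv_monomial, Finsupp.single_eq_same]
  rw [lowering_apply, Finset.sum_eq_single j _ (by simp)]
  · rw [hderiv, map_nsmul, mul_smul_comm, heuler, smul_eq_C_mul]
    simp only [nsmul_eq_mul, map_natCast]
    push_cast
    ring
  · intro i _ hij
    simp [pderiv_X_of_ne hij.symm]

theorem lowering_sum_X : lowering a (∑ i, X i : MvPolynomial σ R) = (∑ i, a i : ℕ) := by
  rw [map_sum, Nat.cast_sum]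
  exact Finset.sum_congr rfl fun i _ ↦ by simpa using lowering_X_pow_succ (R := R) a i 0

theorem X_pow_dvd_lowering_X_pow_mul (j : σ) (f : MvPolynomial σ R) :
    X j ^ (a j + 1) ∣ lowering a (X j ^ (a j + 1) * f) := by
  rw [lowering_mul, lowering_X_pow_succ, sub_self, mul_zero, zero_mul, mul_zero, add_zero]
  refine dvd_sub (dvd_mul_right _ _) ((Finset.dvd_sum fun i _ ↦ ?_).mul_left 2)
  rw [← mul_assoc, X_pow_eq_monomial, X_mul_pderiv_monomial, smul_mul_assoc, nsmul_eq_mul]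
  exact (dvd_mul_right _ _).mul_left _

theorem lowering_mem_span_X_pow {f : MvPolynomial σ R}
    (hf : f ∈ Ideal.span (Set.range fun i ↦ (X i : MvPolynomial σ R) ^ (a i + 1))) :
    lowering a f ∈ Ideal.span (Set.range fun i ↦ (X i : MvPolynomial σ R) ^ (a i + 1)) := by
  obtain ⟨g, rfl⟩ := Ideal.mem_span_range_iff_exists_fun.mp hf
  rw [map_sum]
  refine sum_mem fun i _ ↦ ?_
  rw [mul_comm]
  exact Ideal.mem_of_dvd _ (X_pow_dvd_lowering_X_pow_mul a i (g i))
    (Ideal.subset_span (Set.mem_range_self i))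

theorem isSl2Pair_sum_X_lowering :
    IsSl2Pair (homogeneousSubmodule σ R) (∑ i, a i)
      (Algebra.lsmul R R (MvPolynomial σ R) (∑ i, X i : MvPolynomial σ R)) (lowering a) where
  raise_mem {d _} hf := add_comm 1 d ▸ isHomogeneous_sum_X.mul hf
  lower_mem hf := isHomogeneous_lowering a hf
  lower_eq_zero hf := lowering_eq_zero_of_isHomogeneous_zero a hf
  lower_raise {d f} hf := by
    classical
    have hpderiv (i : σ) : pderiv i (∑ j, X j : MvPolynomial σ R) = 1 := by
      simp [pderiv_X, Pi.single_apply]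
    simp only [Algebra.lsmul_coe, smul_eq_mul, lowering_mul, lowering_sum_X, hpderiv, one_mul,
      IsHomogeneous.sum_X_mul_pderiv hf, smul_eq_C_mul, nsmul_eq_mul]
    simp only [Int.cast_sub, Int.cast_mul, Int.cast_natCast, Int.cast_ofNat, map_sub, map_mul,
      map_natCast, map_ofNat]
    ring

theorem exists_lowering_quotient :
    ∃ D : Module.End R (MvPolynomial σ R ⧸
        Ideal.span (Set.range fun i ↦ (X i : MvPolynomial σ R) ^ (a i + 1))),
      ∀ f, D (Ideal.Quotient.mk _ f) = Ideal.Quotient.mk _ (lowering a f) := by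
  set I := Ideal.span (Set.range fun i ↦ (X i : MvPolynomial σ R) ^ (a i + 1))
  exact ⟨(Submodule.Quotient.restrictScalarsEquiv R I).conj (Submodule.mapQ (I.restrictScalars R)
    (I.restrictScalars R) (lowering a) fun _ ↦ lowering_mem_span_X_pow a), fun _ ↦ rfl⟩

end Polynomial

open Nat in
theorem statement18_general {k σ : Type*} [Field k] [Fintype σ] (a : σ → ℕ)
    (h : ((∑ i, a i)! : k) ≠ 0) :
    IsSLAction
      (quotGr (Ideal.span (Set.range fun i ↦ (X i : MvPolynomial σ k) ^ (a i + 1))))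
      (∑ i, X i : MvPolynomial σ k) := by
  obtain ⟨D, hD⟩ := exists_lowering_quotient (R := k) a
  refine ((isSl2Pair_sum_X_lowering a).map (Ideal.Quotient.mkₐ k _).toLinearMap
    (fun _ ↦ rfl) hD).isSLAction h.isUnit fun d hd ↦ ?_
  refine le_bot_iff.mp (Submodule.map_le_iff_le_comap.mpr fun f hf ↦ ?_)
  exact Ideal.Quotient.eq_zero_iff_mem.mpr (mem_span_X_pow_of_isHomogeneous hd hf)

/-- Let `k` be a field of characteristic `p` with `p > a + b - 2`, where
`a, b ≥ 1`, and let `M = k[x, y]/(x^a, y^b)`.  Then `M` has the strong Lefschetz property. -/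
theorem statement18 {k : Type} [Field k] (p : ℕ) (hp0 : p ≠ 0) [CharP k p]
    (a b : ℕ) (ha : 1 ≤ a) (hb : 1 ≤ b) (hp : a + b - 2 < p) :
    ∃ l : MvPolynomial (Fin 2) k, l ∈ homogeneousSubmodule (Fin 2) k 1 ∧
      IsSLAction
        (quotGr (Ideal.span {(X 0 : MvPolynomial (Fin 2) k) ^ a,
          (X 1 : MvPolynomial (Fin 2) k) ^ b}))
        l := by
  have := Fact.mk (CharP.char_prime_of_ne_zero k hp0)
  obtain ⟨a, rfl⟩ := Nat.exists_eq_add_of_le' ha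
  obtain ⟨b, rfl⟩ := Nat.exists_eq_add_of_le' hb
  refine ⟨∑ i, X i, isHomogeneous_sum_X, ?_⟩
  have h := (IsUnit.natCast_factorial_iff_of_charP (A := k) p (n := a + b)).mpr (by lia)
  have hrange : Set.range (fun i : Fin 2 ↦ (X i : MvPolynomial (Fin 2) k) ^ (![a, b] i + 1)) =
      {X 0 ^ (a + 1), X 1 ^ (b + 1)} := by
    ext
    simp [Fin.exists_fin_two, eq_comm]
  exact hrange ▸ statement18_general ![a, b] (by simpa using h.ne_zero)
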